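/- For every n ≥ 1 and every degree vector a ∈ ℕ^n, the element k_n(a) ∈ F(n) lies in the kernel of the tree differential: ∂_a(k_n(a)) = 0. -/

import Mathlib

/-- Planar rooted trees with leaves decorated by natural numbers (the degrees of
the decorations). -/
inductive DTree : Type
  | leaf (a : ℕ) : DTree
  | node (children : List DTree) : DTree

namespace DTree

mutual
  /-- degree: sum of the leaf decorations plus the number of vertices. -/
  def deg : DTree → ℕ
    | leaf a => a
    | node cs => 1 + degList cs
  def degList : List DTree → ℕ
    | [] => 0
    | c :: rest => deg c + degList rest
end

/-- The weight `W_A` of the vertex at address `p` (list of child indices from the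
root): the number of edges of the path `γ` from the root to `A` plus the sum of
the degrees of the subtrees hanging off the path to the left of it. -/
def weightAt : DTree → List ℕ → ℕ
  | _, [] => 0
  | leaf _, _ :: _ => 0
  | node cs, i :: p => 1 + ((cs.take i).map deg).sum + weightAt (cs.getD i (leaf 0)) p

/-- `∂_A t` : merge the vertex at address `p` into its parent. -/
def contractAt : DTree → List ℕ → DTree
  | t, [] => t
  | leaf a, _ :: _ => leaf a
  | node cs, [i] =>
      match cs.getD i (leaf 0) with
      | node ds => node (cs.take i ++ ds ++ cs.drop (i + 1))
      | leaf _ => node cs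
  | node cs, i :: j :: p => node (cs.set i (contractAt (cs.getD i (leaf 0)) (j :: p)))

mutual
  /-- addresses of all vertices of a tree (root included when the tree is a node). -/
  def vertAddrs : DTree → List (List ℕ)
    | leaf _ => []
    | node cs => [] :: addrsAux cs 0
  def addrsAux : List DTree → ℕ → List (List ℕ)
    | [], _ => []
    | c :: rest, i => (vertAddrs c).map (fun p => i :: p) ++ addrsAux rest (i + 1)
end

/-- addresses of the inner vertices: all vertices except the root. -/
def innerAddrs : DTree → List (List ℕ)
  | leaf _ => []
  | node cs => addrsAux cs 0

end DTree

/-- The linear map `∂` on the free vector space on decorated planar rooted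
trees, `∂ t = Σ_{A inner vertex of t} (−1)^{W_A} ∂_A t`. -/
noncomputable def treeDelta : (DTree →₀ ℚ) →ₗ[ℚ] (DTree →₀ ℚ) :=
  Finsupp.lsum ℚ fun t => LinearMap.toSpanSingleton ℚ (DTree →₀ ℚ)
    (((DTree.innerAddrs t).map fun p =>
        ((-1 : ℚ) ^ DTree.weightAt t p) • Finsupp.single (DTree.contractAt t p) (1 : ℚ)).sum)

/-- grafting, extended bilinearly. -/
noncomputable def graftL : (DTree →₀ ℚ) →ₗ[ℚ] (DTree →₀ ℚ) →ₗ[ℚ] (DTree →₀ ℚ) :=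
  Finsupp.lsum ℚ fun t₁ => LinearMap.toSpanSingleton ℚ ((DTree →₀ ℚ) →ₗ[ℚ] (DTree →₀ ℚ))
    (Finsupp.lsum ℚ fun t₂ => LinearMap.toSpanSingleton ℚ (DTree →₀ ℚ)
      (Finsupp.single (DTree.node [t₁, t₂]) 1))

/-- the element `k_n[a_1,…,a_n]`. -/
noncomputable def kEl : List ℕ → (DTree →₀ ℚ)
  | [] => 0
  | [a] => Finsupp.single (DTree.leaf a) 1
  | a :: b :: rest =>
      ∑ j ∈ (Finset.Ico 1 (a :: b :: rest).length).attach,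
        ((-1 : ℚ) ^ (((a :: b :: rest).take j.1).sum + j.1 - 1)) •
          graftL (kEl ((a :: b :: rest).take j.1)) (kEl ((a :: b :: rest).drop j.1))
termination_by l => l.length
decreasing_by
  · have hj := Finset.mem_Ico.mp j.2
    simp only [List.length_take, List.length_drop, List.length_cons] at hj ⊢
    omega
  · have hj := Finset.mem_Ico.mp j.2
    simp only [List.length_take, List.length_drop, List.length_cons] at hj ⊢
    omega

noncomputable def lin1 {M : Type} [AddCommGroup M] [Module ℚ M] (f : DTree → M) :
    (DTree →₀ ℚ) →ₗ[ℚ] M :=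
  Finsupp.lsum ℚ fun t => LinearMap.toSpanSingleton ℚ M (f t)

theorem lin1_single {M : Type} [AddCommGroup M] [Module ℚ M] (f : DTree → M) (t : DTree) :
    lin1 f (Finsupp.single t 1) = f t := by
  simp [lin1]

theorem graftL_single (s t : DTree) :
    graftL (Finsupp.single s 1) (Finsupp.single t 1) = Finsupp.single (DTree.node [s, t]) 1 := by
  simp [graftL]

noncomputable def DTree.delta (t : DTree) : DTree →₀ ℚ :=
  (((DTree.innerAddrs t).map fun p =>
        ((-1 : ℚ) ^ DTree.weightAt t p) • Finsupp.single (DTree.contractAt t p) (1 : ℚ)).sum)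

theorem treeDelta_single (t : DTree) : treeDelta (Finsupp.single t 1) = t.delta := by
  simp [treeDelta, DTree.delta]

noncomputable def mLt : DTree → DTree → (DTree →₀ ℚ)
  | .leaf _, _ => 0
  | .node ds, t => Finsupp.single (.node (ds ++ [t])) 1

noncomputable def mRt : DTree → DTree → (DTree →₀ ℚ)
  | _, .leaf _ => 0
  | s, .node ds => Finsupp.single (.node (s :: ds)) 1

noncomputable def mL : (DTree →₀ ℚ) →ₗ[ℚ] (DTree →₀ ℚ) →ₗ[ℚ] (DTree →₀ ℚ) :=
  lin1 fun s => lin1 fun t => mLt s t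

noncomputable def mR : (DTree →₀ ℚ) →ₗ[ℚ] (DTree →₀ ℚ) →ₗ[ℚ] (DTree →₀ ℚ) :=
  lin1 fun s => lin1 fun t => mRt s t

noncomputable def T3 : (DTree →₀ ℚ) →ₗ[ℚ] (DTree →₀ ℚ) →ₗ[ℚ] (DTree →₀ ℚ) →ₗ[ℚ] (DTree →₀ ℚ) :=
  lin1 fun s => lin1 fun t => lin1 fun u => Finsupp.single (.node [s, t, u]) 1

noncomputable def sg : (DTree →₀ ℚ) →ₗ[ℚ] (DTree →₀ ℚ) :=
  lin1 fun s => ((-1 : ℚ) ^ s.deg) • Finsupp.single s 1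

theorem ext1 {M : Type} [AddCommGroup M] [Module ℚ M] {f g : (DTree →₀ ℚ) →ₗ[ℚ] M}
    (h : ∀ t, f (Finsupp.single t 1) = g (Finsupp.single t 1)) : f = g := by
  apply Finsupp.lhom_ext'
  intro t
  ext
  simpa using h t

theorem mL_graft (x y z : DTree →₀ ℚ) : mL (graftL x y) z = T3 x y z := by
  have : graftL.compr₂ mL = T3 := by
    refine ext1 fun s => ext1 fun t => ext1 fun u => ?_
    simp [LinearMap.compr₂_apply, graftL_single, mL, T3, lin1_single, mLt]
  exact congrArg (fun f => f x y z) this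

theorem mR_graft (x y z : DTree →₀ ℚ) : mR x (graftL y z) = T3 x y z := by
  induction x using Finsupp.induction_linear with
  | zero => simp
  | add f g hf hg => simp [hf, hg]
  | single s c =>
    have : graftL.compr₂ (mR (Finsupp.single s 1)) = T3 (Finsupp.single s 1) := by
      refine ext1 fun t => ext1 fun u => ?_
      simp [LinearMap.compr₂_apply, graftL_single, mR, T3, lin1_single, mRt]
    have h := congrArg (fun f => c • f y z) this
    have e : Finsupp.single s c = c • Finsupp.single s (1 : ℚ) := by simp
    rw [e]
    simpa only [LinearMap.map_smul, LinearMap.smul_apply, LinearMap.compr₂_apply] using h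

theorem sg_graft (x y : DTree →₀ ℚ) : sg (graftL x y) = - graftL (sg x) (sg y) := by
  have : graftL.compr₂ sg = - graftL.compl₁₂ sg sg := by
    refine ext1 fun s => ext1 fun t => ?_
    simp only [LinearMap.compr₂_apply, graftL_single, sg, lin1_single, LinearMap.neg_apply,
      LinearMap.compl₁₂_apply, LinearMap.map_smul, LinearMap.smul_apply, smul_smul]
    rw [← neg_smul]
    congr 1
    simp only [DTree.deg, DTree.degList]
    ring
  exact congrArg (fun f => f x y) this

theorem addrsAux_ne (cs : List DTree) (i : ℕ) : ∀ p ∈ DTree.addrsAux cs i, p ≠ [] := by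
  induction cs generalizing i with
  | nil => simp [DTree.addrsAux]
  | cons c cs ih =>
    intro p hp
    simp only [DTree.addrsAux, List.mem_append, List.mem_map] at hp
    rcases hp with ⟨q, _, rfl⟩ | hp
    · simp
    · exact ih _ p hp

theorem left_aux (ds : List DTree) (t : DTree) (L : List (List ℕ)) (hL : ∀ p ∈ L, p ≠ []) :
    ((L.map fun p => 0 :: p).map fun p =>
      ((-1 : ℚ) ^ DTree.weightAt (.node [.node ds, t]) p) •
        Finsupp.single (DTree.contractAt (.node [.node ds, t]) p) (1 : ℚ)).sum
      = - graftL ((L.map fun p => ((-1 : ℚ) ^ DTree.weightAt (.node ds) p) •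
        Finsupp.single (DTree.contractAt (.node ds) p) (1 : ℚ)).sum) (Finsupp.single t 1) := by
  induction L with
  | nil => simp
  | cons p L ih =>
    have ih := ih fun q hq => hL q (List.mem_cons_of_mem _ hq)
    have hp := hL p List.mem_cons_self
    obtain ⟨i, q, rfl⟩ := List.exists_cons_of_ne_nil hp
    simp only [List.map_cons, List.sum_cons, ih, map_add, LinearMap.add_apply, LinearMap.map_smul,
      LinearMap.smul_apply, graftL_single, neg_add]
    congr 1
    rw [DTree.weightAt, DTree.contractAt, ← neg_smul]
    simp [pow_add]

theorem right_aux (ds : List DTree) (s : DTree) (L : List (List ℕ)) (hL : ∀ p ∈ L, p ≠ []) :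
    ((L.map fun p => 1 :: p).map fun p =>
      ((-1 : ℚ) ^ DTree.weightAt (.node [s, .node ds]) p) •
        Finsupp.single (DTree.contractAt (.node [s, .node ds]) p) (1 : ℚ)).sum
      = - (((-1 : ℚ) ^ s.deg) • graftL (Finsupp.single s 1)
        ((L.map fun p => ((-1 : ℚ) ^ DTree.weightAt (.node ds) p) •
        Finsupp.single (DTree.contractAt (.node ds) p) (1 : ℚ)).sum)) := by
  induction L with
  | nil => simp
  | cons p L ih =>
    have ih := ih fun q hq => hL q (List.mem_cons_of_mem _ hq)
    have hp := hL p List.mem_cons_self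
    obtain ⟨i, q, rfl⟩ := List.exists_cons_of_ne_nil hp
    simp only [List.map_cons, List.sum_cons, ih, map_add, LinearMap.map_smul,
      graftL_single, neg_add, smul_add, smul_smul]
    congr 1
    rw [DTree.weightAt, DTree.contractAt, ← neg_smul]
    simp [pow_add]

theorem left_sum (s t : DTree) :
    ((s.vertAddrs.map fun p => 0 :: p).map fun p =>
      ((-1 : ℚ) ^ DTree.weightAt (.node [s, t]) p) •
        Finsupp.single (DTree.contractAt (.node [s, t]) p) (1 : ℚ)).sum
      = - mLt s t - graftL s.delta (Finsupp.single t 1) := by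
  cases s with
  | leaf a => simp [DTree.vertAddrs, mLt, DTree.delta, DTree.innerAddrs]
  | node ds =>
    simp only [DTree.vertAddrs, List.map_cons, List.sum_cons, mLt, DTree.delta, DTree.innerAddrs]
    rw [sub_eq_add_neg]
    congr 1
    · simp [DTree.weightAt, DTree.contractAt]
    · exact left_aux _ _ _ (addrsAux_ne ds 0)

theorem right_sum (s t : DTree) :
    ((t.vertAddrs.map fun p => 1 :: p).map fun p =>
      ((-1 : ℚ) ^ DTree.weightAt (.node [s, t]) p) •
        Finsupp.single (DTree.contractAt (.node [s, t]) p) (1 : ℚ)).sum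
      = - ((-1 : ℚ) ^ s.deg) • mRt s t
        - ((-1 : ℚ) ^ s.deg) • graftL (Finsupp.single s 1) t.delta := by
  cases t with
  | leaf a => simp [DTree.vertAddrs, mRt, DTree.delta, DTree.innerAddrs]
  | node ds =>
    simp only [DTree.vertAddrs, List.map_cons, List.sum_cons, mRt, DTree.delta, DTree.innerAddrs]
    rw [sub_eq_add_neg]
    congr 1
    · simp [DTree.weightAt, DTree.contractAt, pow_add]
    · exact right_aux _ _ _ (addrsAux_ne ds 0)

theorem delta_graft (x y : DTree →₀ ℚ) : treeDelta (graftL x y) =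
    - mL x y - graftL (treeDelta x) y - mR (sg x) y - graftL (sg x) (treeDelta y) := by
  have : graftL.compr₂ treeDelta = - mL - graftL.compl₁₂ treeDelta LinearMap.id
      - mR.compl₁₂ sg LinearMap.id - graftL.compl₁₂ sg treeDelta := by
    refine ext1 fun s => ext1 fun t => ?_
    simp only [LinearMap.compr₂_apply, graftL_single, sg, mL, mR, lin1_single, LinearMap.neg_apply,
      LinearMap.compl₁₂_apply, LinearMap.map_smul, LinearMap.smul_apply, LinearMap.sub_apply,
      LinearMap.id_apply, treeDelta_single]
    have h1 := left_sum s t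
    have h2 := right_sum s t
    rw [DTree.delta]
    simp only [DTree.innerAddrs, DTree.addrsAux, List.append_nil, List.map_append, List.sum_append,
      zero_add]
    rw [h1, h2]
    module
  exact congrArg (fun f => f x y) this

noncomputable def ee (l : List ℕ) : ℚ := (-1) ^ (l.sum + l.length + 1)

theorem ee_append (l m : List ℕ) : ee (l ++ m) = - (ee l * ee m) := by
  simp only [ee, List.sum_append, List.length_append]; ring

theorem ee_sq (l : List ℕ) : ee l * ee l = 1 := by
  simp only [ee, ← pow_add]; exact Even.neg_one_pow ⟨_, rfl⟩

theorem kEl_eq (l : List ℕ) (hl : 2 ≤ l.length) : kEl l =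
    ∑ j ∈ Finset.Ico 1 l.length, ee (l.take j) • graftL (kEl (l.take j)) (kEl (l.drop j)) := by
  match l, hl with
  | a :: b :: r, _ =>
    rw [kEl]
    rw [← Finset.sum_attach (Finset.Ico 1 _)]
    refine Finset.sum_congr rfl fun j _ => ?_
    have hj := Finset.mem_Ico.mp j.2
    congr 1
    rw [ee, List.length_take, min_eq_left hj.2.le]
    obtain ⟨k, hk⟩ : ∃ k, j.1 = k + 1 := ⟨j.1 - 1, by omega⟩
    rw [hk, ← add_assoc, Nat.add_sub_cancel]
    ring

theorem sg_kEl (n : ℕ) : ∀ l : List ℕ, l.length = n → sg (kEl l) = ee l • kEl l := by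
  induction n using Nat.strong_induction_on with
  | _ n ih =>
    intro l hn
    match l, hn with
    | [], _ => simp [kEl]
    | [a], _ => simp [kEl, sg, lin1_single, DTree.deg, ee, pow_add]
    | a :: b :: r, hn =>
      generalize hl : a :: b :: r = l at hn
      have h2 : 2 ≤ l.length := by simp [← hl]
      rw [kEl_eq l h2, map_sum, Finset.smul_sum]
      refine Finset.sum_congr rfl fun j hj => ?_
      have hj := Finset.mem_Ico.mp hj
      have e : ee l = - (ee (l.take j) * ee (l.drop j)) := by
        conv_lhs => rw [← List.take_append_drop j l, ee_append]
      rw [map_smul, sg_graft, ih _ _ (l.take j) rfl, ih _ _ (l.drop j) rfl, e]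
      · simp only [LinearMap.map_smul, LinearMap.smul_apply]
        module
      · simp; omega
      · simp; omega

theorem mL_kEl (l : List ℕ) (z : DTree →₀ ℚ) : mL (kEl l) z =
    ∑ i ∈ Finset.Ico 1 l.length, ee (l.take i) • T3 (kEl (l.take i)) (kEl (l.drop i)) z := by
  match l with
  | [] => simp [kEl]
  | [a] =>
    have : mL (Finsupp.single (DTree.leaf a) 1) = 0 := by
      refine ext1 fun t => ?_
      simp [mL, lin1_single, mLt]
    simp [kEl, this]
  | a :: b :: r =>
    rw [kEl_eq _ (by simp)]
    simp only [map_sum, LinearMap.sum_apply, LinearMap.map_smul, LinearMap.smul_apply, mL_graft]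

theorem mR_kEl (l : List ℕ) (z : DTree →₀ ℚ) : mR z (kEl l) =
    ∑ i ∈ Finset.Ico 1 l.length, ee (l.take i) • T3 z (kEl (l.take i)) (kEl (l.drop i)) := by
  match l with
  | [] => simp [kEl]
  | [a] =>
    have : mR.flip (Finsupp.single (DTree.leaf a) 1) = 0 := by
      refine ext1 fun t => ?_
      simp [mR, lin1_single, mRt]
    have h := congrArg (fun f => f z) this
    simpa [kEl] using h
  | a :: b :: r =>
    rw [kEl_eq _ (by simp)]
    simp only [map_sum, LinearMap.map_smul, mR_graft]

theorem delta_kEl (n : ℕ) : ∀ l : List ℕ, l.length = n → treeDelta (kEl l) = 0 := by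
  induction n using Nat.strong_induction_on with
  | _ n ih =>
    intro l hn
    match l, hn with
    | [], _ => simp [kEl]
    | [a], _ => simp [kEl, treeDelta_single, DTree.delta, DTree.innerAddrs]
    | a :: b :: r, hn =>
      generalize hl : a :: b :: r = l at hn
      have h2 : 2 ≤ l.length := by simp [← hl]
      rw [kEl_eq l h2, map_sum]
      have step : ∀ j ∈ Finset.Ico 1 l.length,
          treeDelta (ee (l.take j) • graftL (kEl (l.take j)) (kEl (l.drop j))) =
          - (∑ i ∈ Finset.Ico 1 j, (ee (l.take j) * ee (l.take i)) •
              T3 (kEl (l.take i)) (kEl ((l.drop i).take (j - i))) (kEl (l.drop j)))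
          - (∑ k ∈ Finset.Ico 1 (l.length - j), ee ((l.drop j).take k) •
              T3 (kEl (l.take j)) (kEl ((l.drop j).take k)) (kEl (l.drop (j + k)))) := by
        intro j hj
        have hj := Finset.mem_Ico.mp hj
        rw [map_smul, delta_graft, ih _ _ (l.take j) rfl, ih _ _ (l.drop j) rfl, sg_kEl _ _ rfl,
          map_smul, LinearMap.smul_apply, mL_kEl, mR_kEl]
        · simp only [map_zero, LinearMap.zero_apply, sub_zero, smul_sub, smul_smul, ← mul_assoc, ee_sq, one_mul,
            smul_neg, Finset.smul_sum, List.length_take, List.length_drop, min_eq_left hj.2.le,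
            List.drop_drop]
          congr 2
          refine Finset.sum_congr rfl fun i hi => ?_
          have hi := Finset.mem_Ico.mp hi
          rw [List.take_take, min_eq_left hi.2.le, List.drop_take]
        · simp; omega
        · simp; omega
      rw [Finset.sum_congr rfl step, Finset.sum_sub_distrib, Finset.sum_neg_distrib, sub_eq_zero,
        ← Finset.sum_neg_distrib]
      simp only [← Finset.sum_neg_distrib]
      rw [Finset.sum_sigma', Finset.sum_sigma']
      refine Finset.sum_bij' (fun x _ => ⟨x.2, x.1 - x.2⟩) (fun x _ => ⟨x.1 + x.2, x.1⟩) ?_ ?_ ?_ ?_ ?_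
      · rintro ⟨j, i⟩ h
        simp only [Finset.mem_sigma, Finset.mem_Ico] at h ⊢
        omega
      · rintro ⟨j, i⟩ h
        simp only [Finset.mem_sigma, Finset.mem_Ico] at h ⊢
        omega
      · rintro ⟨j, i⟩ h
        simp only [Finset.mem_sigma, Finset.mem_Ico] at h ⊢
        simp; omega
      · rintro ⟨j, i⟩ h
        simp
      · rintro ⟨j, i⟩ h
        simp only [Finset.mem_sigma, Finset.mem_Ico] at h ⊢
        obtain ⟨k, rfl⟩ : ∃ k, j = i + k := ⟨j - i, by omega⟩
        rw [Nat.add_sub_cancel_left, List.take_add, ee_append, ← neg_smul]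
        congr 1
        linear_combination (ee (List.take k (List.drop i l))) * ee_sq (l.take i)

/-- Appendix A: for every `n ≥ 1` and every degree vector
`a ∈ ℕ^n`, the element `k_n[a]` lies in the kernel of the tree differential:
`∂ k_n[a] = 0`. -/
theorem stmt_15 (l : List ℕ) (hl : l ≠ []) : treeDelta (kEl l) = 0 := by
  exact delta_kEl _ l rfl
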